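/- arXiv:1701.08949 — 3 statements merged into one kernel-verified Lean document; each statement's English description precedes it below -/
import Mathlib

section
/- Let A be an algebra and let α₁,…,αₙ,β,γ,δ and δ_t (t ∈ I) be congruences of A. Then: (1) if C(α₁,…,αₙ;δ_t) holds for every t ∈ I, then C(α₁,…,αₙ;⋀_{t∈I} δ_t) holds; (2) if α_i ≤ β_i for each i, then C(β₁,…,βₙ;δ) implies C(α₁,…,αₙ;δ); (3) for any permutation σ of {1,…,n−1}, C(α₁,…,α_{n−1},αₙ;δ) holds if and only if C(α_{σ(1)},…,α_{σ(n−1)},αₙ;δ) holds; (4) for any congruence γ ≤ α₁∧⋯∧αₙ∧δ, C(α₁,…,αₙ;δ) holds in A if and only if C(α₁/γ,…,αₙ/γ;δ/γ) holds in A/γ; (5) for i < n, C(α₁,…,α_{i−1},α_{i+1},…,αₙ;δ) implies C(α₁,…,αₙ;δ); (6) if αₙ ∧ (β∘(δ∧αₙ)∘β) ⊆ δ, then for every k < n, C(α₁,…,α_{k−1},β,α_{k+1},…,αₙ;δ) holds, and if in addition αₙ ∧ (γ∘(δ∧αₙ)∘γ) ⊆ δ, then C(α₁,…,α_{k−1},β∨γ,α_{k+1},…,αₙ;δ)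 holds. -/
set_option autoImplicit false

namespace UA

/-- A signature: a type of operation symbols, each with a finite arity. -/
structure Signature : Type 1 where
  ops : Type
  arity : ops → ℕ

/-- An algebra for a signature: a carrier set together with an interpretation
of every operation symbol. -/
structure Algebra (σ : Signature) : Type 1 where
  carrier : Type
  interp : (o : σ.ops) → (Fin (σ.arity o) → carrier) → carrier

variable {σ : Signature}

/-- A congruence of an algebra: an equivalence relation compatible with all
basic operations. -/
structure Con (A : Algebra σ) : Type where
  r : A.carrier → A.carrier → Prop
  refl : ∀ a, r a a
  symm : ∀ {a b}, r a b → r b a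
  trans : ∀ {a b c}, r a b → r b c → r a c
  compat : ∀ (o : σ.ops) (x y : Fin (σ.arity o) → A.carrier),
      (∀ i, r (x i) (y i)) → r (A.interp o x) (A.interp o y)

namespace Con

variable {A : Algebra σ}

instance : LE (Con A) := ⟨fun c d => ∀ a b : A.carrier, c.r a b → d.r a b⟩
instance : LT (Con A) := ⟨fun c d => c ≤ d ∧ ¬ d ≤ c⟩

/-- The total congruence `1_A`. -/
def top : Con A where
  r := fun _ _ => True
  refl := fun _ => trivial
  symm := fun _ => trivial
  trans := fun _ _ => trivial
  compat := fun _ _ _ _ => trivial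

/-- The identity congruence `0_A`. -/
def bot : Con A where
  r := fun a b => a = b
  refl := fun _ => rfl
  symm := fun h => h.symm
  trans := fun h h' => h.trans h'
  compat := fun o _ _ h => congrArg (A.interp o) (funext h)

/-- Meet of an arbitrary family of congruences (intersection). -/
def sInf (S : Set (Con A)) : Con A where
  r a b := ∀ c ∈ S, c.r a b
  refl a c _ := c.refl a
  symm h c hc := c.symm (h c hc)
  trans h h' c hc := c.trans (h c hc) (h' c hc)
  compat o x y h c hc := c.compat o x y (fun i => h i c hc)

/-- Binary meet of congruences. -/
def inf (c d : Con A) : Con A where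
  r a b := c.r a b ∧ d.r a b
  refl a := ⟨c.refl a, d.refl a⟩
  symm h := ⟨c.symm h.1, d.symm h.2⟩
  trans h h' := ⟨c.trans h.1 h'.1, d.trans h.2 h'.2⟩
  compat o x y h := ⟨c.compat o x y fun i => (h i).1, d.compat o x y fun i => (h i).2⟩

/-- The congruence generated by a set of pairs. -/
def conGen (S : Set (A.carrier × A.carrier)) : Con A :=
  sInf {c : Con A | ∀ p ∈ S, c.r p.1 p.2}

/-- Binary join of congruences. -/
def sup (c d : Con A) : Con A := conGen {p | c.r p.1 p.2 ∨ d.r p.1 p.2}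

/-- Join of a family of congruences. -/
def iSup {I : Type} (f : I → Con A) : Con A := conGen {p | ∃ i, (f i).r p.1 p.2}

/-- Composition of congruences as binary relations. -/
def comp (c d : Con A) (a b : A.carrier) : Prop := ∃ x, c.r a x ∧ d.r x b

/-- `d` covers `c` in the congruence lattice. -/
def Covers (c d : Con A) : Prop := c < d ∧ ∀ e : Con A, c < e → e ≤ d → e = d

theorem le_sup_right {c d : Con A} : d ≤ sup c d :=
  fun a b h e he => he (a, b) (Or.inr h)

def toSetoid (c : Con A) : Setoid A.carrier := ⟨c.r, ⟨c.refl, c.symm, c.trans⟩⟩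

end Con

/-- The quotient algebra `A/γ`. -/
noncomputable def quotAlg (A : Algebra σ) (γ : Con A) : Algebra σ where
  carrier := Quotient γ.toSetoid
  interp o x := Quotient.mk γ.toSetoid (A.interp o (fun i => (x i).out))

/-- The quotient congruence `α/γ` for `γ ≤ α`. -/
noncomputable def Con.quot {A : Algebra σ} (α γ : Con A) (h : γ ≤ α) : Con (quotAlg A γ) where
  r x y := Quotient.liftOn₂ x y (fun a b => α.r a b)
    (fun a b a' b' ha hb => propext
      ⟨fun hr => α.trans (α.symm (h _ _ ha)) (α.trans hr (h _ _ hb)),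
       fun hr => α.trans (h _ _ ha) (α.trans hr (α.symm (h _ _ hb)))⟩)
  refl x := Quotient.inductionOn x fun a => α.refl a
  symm {x y} h' := Quotient.inductionOn₂ x y (fun _ _ hab => α.symm hab) h'
  trans {x y z} h1 h2 :=
    Quotient.inductionOn₃ x y z (fun _ _ _ hab hbc => α.trans hab hbc) h1 h2
  compat o x y hxy := by
    show α.r (A.interp o fun i => (x i).out) (A.interp o fun i => (y i).out)
    refine α.compat o _ _ fun i => ?_
    have h1 := hxy i
    rw [← Quotient.out_eq (x i), ← Quotient.out_eq (y i)] at h1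
    exact h1

/-- The polynomial operations of an algebra: the clone generated by the basic
operations, the projections and the constants. -/
inductive IsPolynomial (A : Algebra σ) : {n : ℕ} → ((Fin n → A.carrier) → A.carrier) → Prop
  | proj {n : ℕ} (i : Fin n) : IsPolynomial A (fun x => x i)
  | const {n : ℕ} (a : A.carrier) : IsPolynomial A (fun _ : Fin n → A.carrier => a)
  | app {n : ℕ} (o : σ.ops) (g : Fin (σ.arity o) → (Fin n → A.carrier) → A.carrier) :
      (∀ j, IsPolynomial A (g j)) → IsPolynomial A (fun x => A.interp o (fun j => g j x))

/-- Substituting, coordinatewise according to the grouping `g` and the choice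
vector `ε`, the entries of `b` (where `ε` is `true`) or of `a` (where `ε` is `false`). -/
def chooseVec {β : Type} {N n : ℕ} (g : Fin N → Fin n) (a b : Fin N → β)
    (ε : Fin n → Bool) : Fin N → β :=
  fun i => if ε (g i) then b i else a i

/-- The higher centralizer relation `C(α₁,…,αₙ,β;δ)` of Bulatov.  Polynomials with
grouped variables are modelled by a polynomial `p` of arity `N` together with a
grouping map `g : Fin N → Fin (n+1)`; the group `Fin.last n` is the `β`-group. -/
def Centralizes {A : Algebra σ} {n : ℕ} (α : Fin n → Con A) (β δ : Con A) : Prop :=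
  ∀ (N : ℕ) (p : (Fin N → A.carrier) → A.carrier), IsPolynomial A p →
    ∀ (g : Fin N → Fin (n + 1)) (a b : Fin N → A.carrier),
      (∀ i, (Fin.lastCases (motive := fun _ => Con A) β α (g i)).r (a i) (b i)) →
      (∀ ε : Fin n → Bool, ε ≠ (fun _ => true) →
        δ.r (p (chooseVec g a b (Fin.lastCases (motive := fun _ => Bool) false ε)))
            (p (chooseVec g a b (Fin.lastCases (motive := fun _ => Bool) true ε)))) →
      δ.r (p (chooseVec g a b (Fin.lastCases (motive := fun _ => Bool) false fun _ => true)))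
          (p (chooseVec g a b (Fin.lastCases (motive := fun _ => Bool) true fun _ => true)))

/-- The higher commutator `[α₁,…,αₙ,β]`: the smallest congruence `δ` such that
`C(α₁,…,αₙ,β;δ)` holds. -/
def commutator {A : Algebra σ} {n : ℕ} (α : Fin n → Con A) (β : Con A) : Con A :=
  Con.sInf {δ : Con A | Centralizes α β δ}

/-- The higher commutator of a nonempty list of congruences, with the convention
`[α] = α` for a single congruence. -/
def commList {A : Algebra σ} : {n : ℕ} → (Fin (n + 1) → Con A) → Con A
  | 0, γ => γ 0
  | (n+1), γ => commutator (fun j : Fin (n+1) => γ j.castSucc) (γ (Fin.last (n+1)))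

/-- The `m`-fold commutator `[θ,…,θ]_m` (for `m ≥ 1`). -/
def nfold {A : Algebra σ} (θ : Con A) (m : ℕ) : Con A :=
  commList (fun _ : Fin (m - 1 + 1) => θ)

/-- The binary commutator `[c,d]`. -/
def binComm {A : Algebra σ} (c d : Con A) : Con A := commutator (fun _ : Fin 1 => c) d

/-- The lower central series `(θ]ⁿ`. -/
def lcs {A : Algebra σ} (θ : Con A) : ℕ → Con A
  | 0 => θ
  | (k+1) => binComm θ (lcs θ k)

/-- The derived series `[θ]ⁿ`. -/
def derived {A : Algebra σ} (θ : Con A) : ℕ → Con A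
  | 0 => θ
  | (k+1) => binComm (derived θ k) (derived θ k)

/-- An algebra is nilpotent if some term of the lower central series of `1_A` is `0_A`. -/
def Nilpotent (A : Algebra σ) : Prop := ∃ m, lcs (Con.top : Con A) m = Con.bot

/-- An algebra is nilpotent of class `n` if `(1_A]ⁿ = 0_A`. -/
def NilpotentOfClass (A : Algebra σ) (n : ℕ) : Prop := lcs (Con.top : Con A) n = Con.bot

/-- A congruence is solvable if some term of its derived series is `0_A`. -/
def SolvableCon {A : Algebra σ} (θ : Con A) : Prop := ∃ m, derived θ m = Con.bot

/-- `A` is `n`-supernilpotent if `[1_A,…,1_A]_n = 0_A`. -/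
def Supernilpotent (A : Algebra σ) (n : ℕ) : Prop := nfold (Con.top : Con A) n = Con.bot

/-- A polynomial `f` absorbs the tuple `a` to the element `c`. -/
def Absorbs (A : Algebra σ) {k : ℕ} (f : (Fin k → A.carrier) → A.carrier)
    (a : Fin k → A.carrier) (c : A.carrier) : Prop :=
  ∀ b : Fin k → A.carrier, (∃ i, b i = a i) → f b = c

/-- Terms over a signature with variables in `X`. -/
inductive Term (σ : Signature) (X : Type) : Type
  | var : X → Term σ X
  | app : (o : σ.ops) → (Fin (σ.arity o) → Term σ X) → Term σ X

/-- Evaluation of a term in an algebra under an assignment of the variables. -/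
def Term.eval {X : Type} (A : Algebra σ) (v : X → A.carrier) : Term σ X → A.carrier
  | Term.var x => v x
  | Term.app o t => A.interp o fun i => Term.eval A v (t i)

/-- Substitution of terms into a term. -/
def Term.subst {X Y : Type} : Term σ X → (X → Term σ Y) → Term σ Y
  | Term.var x, s => s x
  | Term.app o t, s => Term.app o fun i => Term.subst (t i) s

/-- `A` possesses a Mal'cev term. -/
def HasMalcevTerm (A : Algebra σ) : Prop :=
  ∃ t : Term σ (Fin 3), ∀ a b : A.carrier,
    t.eval A ![a, b, b] = a ∧ t.eval A ![b, b, a] = a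

/-- A class of algebras is a variety when it is the class of all models of a set
of identities. -/
def IsVariety (V : Algebra σ → Prop) : Prop :=
  ∃ E : Set (Term σ ℕ × Term σ ℕ),
    ∀ A : Algebra σ, V A ↔ ∀ e ∈ E, ∀ v : ℕ → A.carrier, e.1.eval A v = e.2.eval A v

/-- Two terms are `V`-equivalent when they evaluate equally in every member of `V`. -/
def vSetoid (V : Algebra σ → Prop) (X : Type) : Setoid (Term σ X) where
  r t s := ∀ A : Algebra σ, V A → ∀ v : X → A.carrier, t.eval A v = s.eval A v
  iseqv := ⟨fun _ _ _ _ => rfl, fun h A hA v => (h A hA v).symm,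
    fun h h' A hA v => (h A hA v).trans (h' A hA v)⟩

/-- The `V`-free algebra on the set `X` of generators. -/
noncomputable def freeAlg (V : Algebra σ → Prop) (X : Type) : Algebra σ where
  carrier := Quotient (vSetoid V X)
  interp o x := Quotient.mk (vSetoid V X) (Term.app o fun i => (x i).out)

/-- The principal congruence `θ(a,b)` generated by the pair `(a,b)`. -/
def conPair (A : Algebra σ) (a b : A.carrier) : Con A := Con.conGen {(a, b)}

/-- A weak difference term for the class `V`. -/
def IsWeakDiffTerm (V : Algebra σ → Prop) (c : Term σ (Fin 3)) : Prop :=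
  ∀ A : Algebra σ, V A → ∀ a b : A.carrier,
    (binComm (conPair A a b) (conPair A a b)).r (c.eval A ![a, b, b]) a ∧
    (binComm (conPair A a b) (conPair A a b)).r a (c.eval A ![b, b, a])

/-- A weak `n`-difference term for the class `V`. -/
def IsWeakNDiffTerm (V : Algebra σ → Prop) (n : ℕ) (c : Term σ (Fin 3)) : Prop :=
  ∀ A : Algebra σ, V A → ∀ a b : A.carrier,
    (nfold (conPair A a b) n).r (c.eval A ![a, b, b]) a ∧
    (nfold (conPair A a b) n).r a (c.eval A ![b, b, a])

/-- Order-preserving maps on the congruence lattice. -/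
def MonotoneCon {A : Algebra σ} (F : Con A → Con A) : Prop :=
  ∀ c d : Con A, c ≤ d → F c ≤ F d

/-- `p` is a weak `f`-term of `A` with respect to the interpretation `F`. -/
def IsWeakFTerm (A : Algebra σ) (F : Con A → Con A) (p : Term σ (Fin 3)) : Prop :=
  ∀ (θ : Con A) (a b : A.carrier), θ.r a b →
    (F θ).r (p.eval A ![a, b, b]) a ∧ (F θ).r a (p.eval A ![b, b, a])

/-- `p` is a weak `f`-term for the class `V`. -/
def HasWeakFTermVariety (V : Algebra σ → Prop) (p : Term σ (Fin 3)) : Prop :=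
  ∀ A : Algebra σ, V A → ∃ F : Con A → Con A, MonotoneCon F ∧ IsWeakFTerm A F p

/-- The set `T^θ_{n,f}(θ₁,…,θₙ)` of pairs coming from polynomials which
`f(θ)`-absorb on the cube `{ā₁,b̄₁}×⋯×{āₙ,b̄ₙ}`. -/
def TSet (A : Algebra σ) (F : Con A → Con A) (θ : Con A) {n : ℕ} (θs : Fin n → Con A) :
    Set (A.carrier × A.carrier) :=
  {pr | ∃ (N : ℕ) (g : (Fin N → A.carrier) → A.carrier), IsPolynomial A g ∧
    ∃ (gr : Fin N → Fin n) (a b : Fin N → A.carrier),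
      (∀ i, (θs (gr i)).r (a i) (b i)) ∧
      (∀ ε : Fin n → Bool, (∃ j, ε j = false) →
        (F θ).r (g (fun i => if ε (gr i) then b i else a i)) (g a)) ∧
      pr = (g b, g a)}

/-- Homomorphisms of algebras. -/
def IsHom (A B : Algebra σ) (h : A.carrier → B.carrier) : Prop :=
  ∀ (o : σ.ops) (x : Fin (σ.arity o) → A.carrier),
    h (A.interp o x) = B.interp o (fun i => h (x i))

/-- The product of a family of algebras. -/
def prodAlg {I : Type} (As : I → Algebra σ) : Algebra σ where
  carrier := ∀ i, (As i).carrier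
  interp o x i := (As i).interp o (fun j => x j i)

/-- The subuniverse generated by a subset. -/
inductive Gen (A : Algebra σ) (S : Set A.carrier) : A.carrier → Prop
  | base {a : A.carrier} : a ∈ S → Gen A S a
  | app (o : σ.ops) (x : Fin (σ.arity o) → A.carrier) :
      (∀ i, Gen A S (x i)) → Gen A S (A.interp o x)

/-- `A` possesses a Taylor term. -/
def HasTaylorTerm (A : Algebra σ) : Prop :=
  ∃ (n : ℕ) (t : Term σ (Fin n)), 1 ≤ n ∧
    (∀ a : A.carrier, t.eval A (fun _ => a) = a) ∧
    ∀ i : Fin n, ∃ u v : Fin n → Bool, u i = true ∧ v i = false ∧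
      ∀ x y : A.carrier,
        t.eval A (fun j => if u j then x else y) = t.eval A (fun j => if v j then x else y)

/-- The variety `V` possesses a Taylor term. -/
def VarietyHasTaylorTerm (V : Algebra σ → Prop) : Prop :=
  ∃ (n : ℕ) (t : Term σ (Fin n)), 1 ≤ n ∧
    (∀ A : Algebra σ, V A → ∀ a : A.carrier, t.eval A (fun _ => a) = a) ∧
    ∀ i : Fin n, ∃ u v : Fin n → Bool, u i = true ∧ v i = false ∧
      ∀ A : Algebra σ, V A → ∀ x y : A.carrier,
        t.eval A (fun j => if u j then x else y) = t.eval A (fun j => if v j then x else y)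

/-- `Ξ(θ)`: the smallest set of congruences containing `θ` and closed under
higher commutators (of arity at least 2) of its members. -/
inductive Xi {A : Algebra σ} (θ : Con A) : Con A → Prop
  | base : Xi θ θ
  | comm {k : ℕ} (γ : Fin (k + 2) → Con A) : (∀ j, Xi θ (γ j)) → Xi θ (commList γ)

/-- An expanded loop on the carrier `α` with extra operations indexed by `ι`. -/
structure ExpLoop (ι : Type) (ar : ι → ℕ) (α : Type) : Type where
  mul : α → α → α
  ldiv : α → α → α
  rdiv : α → α → α
  zero : α
  extra : (i : ι) → (Fin (ar i) → α) → α
  ldiv_mul : ∀ x y, ldiv x (mul x y) = y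
  mul_rdiv : ∀ x y, rdiv (mul x y) y = x
  mul_ldiv : ∀ x y, mul x (ldiv x y) = y
  rdiv_mul : ∀ x y, mul (rdiv x y) y = x
  zero_mul : ∀ x, mul zero x = x
  mul_zero : ∀ x, mul x zero = x

/-- Operation symbols of an expanded loop. -/
inductive LoopOp (ι : Type) : Type
  | mul | ldiv | rdiv | zero
  | extra : ι → LoopOp ι

/-- The signature of an expanded loop. -/
@[reducible] def loopSig (ι : Type) (ar : ι → ℕ) : Signature where
  ops := LoopOp ι
  arity o := match o with
    | .mul => 2
    | .ldiv => 2
    | .rdiv => 2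
    | .zero => 0
    | .extra i => ar i

/-- The algebra underlying an expanded loop. -/
def ExpLoop.toAlgebra {ι : Type} {ar : ι → ℕ} {α : Type} (L : ExpLoop ι ar α) :
    Algebra (loopSig ι ar) where
  carrier := α
  interp o := match o with
    | .mul => fun x => L.mul (x 0) (x 1)
    | .ldiv => fun x => L.ldiv (x 0) (x 1)
    | .rdiv => fun x => L.rdiv (x 0) (x 1)
    | .zero => fun _ => L.zero
    | .extra i => L.extra i

/-- An expanded loop is of `n`-type. -/
def ExpLoop.IsNType {ι : Type} {ar : ι → ℕ} {α : Type} (L : ExpLoop ι ar α) (n : ℕ) : Prop :=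
  (∀ p : Σ k : ℕ, (Fin k → α) → α,
      (∃ i : ι, p = ⟨ar i, L.extra i⟩) ↔
        (1 ≤ p.1 ∧ p.1 ≤ n - 1 ∧ IsPolynomial L.toAlgebra p.2 ∧
          Absorbs L.toAlgebra p.2 (fun _ => L.zero) L.zero)) ∧
  (∀ f : (Fin (n - 1) → α) → α,
      IsPolynomial L.toAlgebra f → Absorbs L.toAlgebra f (fun _ => L.zero) L.zero →
      ∀ (j : Fin (n - 1)) (x : Fin (n - 1) → α) (u v : α),
        f (Function.update x j (L.mul u v)) =
          L.mul (f (Function.update x j u)) (f (Function.update x j v))) ∧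
  (∀ k : ℕ, 2 ≤ k → k < n →
      commList (Fin.snoc (fun _ : Fin (n - k) => (Con.top : Con L.toAlgebra))
        (nfold Con.top k)) = Con.bot)

/-- `A` is polynomially equivalent to an `n`-type expanded loop on the same carrier. -/
def PolyEquivNTypeLoop (A : Algebra σ) (n : ℕ) : Prop :=
  ∃ (ι : Type) (ar : ι → ℕ) (L : ExpLoop ι ar A.carrier),
    L.IsNType n ∧
    ∀ (k : ℕ) (f : (Fin k → A.carrier) → A.carrier),
      IsPolynomial A f ↔ IsPolynomial L.toAlgebra f

/-- Left-associated product of a list with initial value `c`. -/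
def lprodFrom {β : Type} (mul : β → β → β) (c : β) (l : List β) : β := List.foldl mul c l

/-- Left-associated product of a list (with a default value for the empty list). -/
def lprodList {β : Type} (mul : β → β → β) (dflt : β) : List β → β
  | [] => dflt
  | a :: l => List.foldl mul a l

/-- Left-associated product of a nonempty tuple. -/
def lassoc {β : Type} (mul : β → β → β) : {m : ℕ} → (Fin (m + 1) → β) → β
  | 0, y => y 0
  | (m+1), y => mul (lassoc mul (Fin.init y)) (y (Fin.last (m+1)))

/-- `A` has a representation of degree `n`. -/
def HasRepOfDegree (A : Algebra σ) (n : ℕ) : Prop :=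
  ∃ (z : A.carrier) (r : (Fin 2 → A.carrier) → A.carrier),
    IsPolynomial A r ∧ (∀ x : A.carrier, r ![z, x] = x) ∧ (∀ x : A.carrier, r ![x, z] = x) ∧
    ∀ (k : ℕ) (f : (Fin k → A.carrier) → A.carrier), IsPolynomial A f →
      ∃ (c : A.carrier) (R : ℕ → (Fin k → A.carrier) → A.carrier),
        (∀ m : ℕ, 1 ≤ m → m ≤ min k n →
          ∃ (l : List (Finset (Fin k)))
            (t : (S : Finset (Fin k)) → (Fin S.card → A.carrier) → A.carrier),
            l.Nodup ∧
            (∀ S : Finset (Fin k), S ∈ l ↔ S.card = m) ∧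
            (∀ S ∈ l, IsPolynomial A (t S) ∧ Absorbs A (t S) (fun _ => z) z) ∧
            (∀ x : Fin k → A.carrier,
              R m x = lprodList (fun u v => r ![u, v]) z
                (l.map (fun S => t S (fun j => x ((S.orderIsoOfFin rfl j).val)))))) ∧
        ∀ x : Fin k → A.carrier,
          f x = lprodFrom (fun u v => r ![u, v]) c
            ((List.range' 1 (min k n)).map (fun m => R m x))

/-- Products of `0`-absorbing polynomials (of arities between `lo` and `hi`)
in a given set of variables. -/
inductive ProdOfAbs {ι : Type} {ar : ι → ℕ} {α : Type} (L : ExpLoop ι ar α)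
    (lo hi : ℕ) {I : Type} : ((I → α) → α) → Prop
  | base {p : ℕ} (h : (Fin p → α) → α) (sel : Fin p → I) :
      lo ≤ p → p ≤ hi → IsPolynomial L.toAlgebra h →
      Absorbs L.toAlgebra h (fun _ => L.zero) L.zero →
      ProdOfAbs L lo hi (fun v => h (fun j => v (sel j)))
  | mul {F G : (I → α) → α} :
      ProdOfAbs L lo hi F → ProdOfAbs L lo hi G →
      ProdOfAbs L lo hi (fun v => L.mul (F v) (G v))

/-- The terms `q_m` (for `m ≥ 2`, `qSeq q (m-2)` is `q_m`):
`q₂ := q`, `q_{m+1}(x,y,z) := q(x, q_m(x,y,y), q_m(x,y,z))`. -/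
def qSeq (q : Term σ (Fin 3)) : ℕ → Term σ (Fin 3)
  | 0 => q
  | (k+1) => q.subst ![Term.var 0, (qSeq q k).subst ![Term.var 0, Term.var 1, Term.var 1], qSeq q k]


/-!
Each part transforms one instance of the term condition, i.e. a polynomial together with the
cube spanned by a pair of tuples, into another one.

* Permuting the initial congruences and deleting some of them are the same step: starting the
  cube at the vertex where the variables of the deleted congruences are already switched, these
  variables become constant and can be assigned to the last block.
* Polynomials of `A/γ` and of `A` correspond to each other along the projection, which is
  a surjective homomorphism.
* In (6), the two endpoints of an edge of the cube are polynomials `P u` and `Q u` in the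
  variables `u` of block `k`, and they are always congruent modulo the last congruence. Moving `u`
  along a chain of congruences that each satisfy the hypothesis therefore preserves
  `P u ≡ Q u` modulo `δ`, and such chains make up the join.
-/

section Polynomials

variable {A B : Algebra σ} {m n : ℕ}

theorem IsPolynomial.rel (c : Con A) {p : (Fin n → A.carrier) → A.carrier}
    (hp : IsPolynomial A p) {x y : Fin n → A.carrier} (h : ∀ i, c.r (x i) (y i)) :
    c.r (p x) (p y) := by
  induction hp with
  | proj i => exact h i
  | const a => exact c.refl a
  | app o g _ ih => exact c.compat o _ _ ih

theorem IsPolynomial.comp {p : (Fin m → A.carrier) → A.carrier} (hp : IsPolynomial A p)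
    {q : Fin m → (Fin n → A.carrier) → A.carrier} (hq : ∀ i, IsPolynomial A (q i)) :
    IsPolynomial A fun x => p fun i => q i x := by
  induction hp with
  | proj i => exact hq i
  | const a => exact .const a
  | app o g _ ih => exact .app o _ ih

open scoped Classical in
theorem IsPolynomial.comp_piecewise {p : (Fin n → A.carrier) → A.carrier}
    (hp : IsPolynomial A p) (s : Set (Fin n)) (c : Fin n → A.carrier) :
    IsPolynomial A fun x => p (s.piecewise x c) := by
  refine hp.comp (q := fun i x => s.piecewise x c i) fun i => ?_
  by_cases hi : i ∈ s
  · simpa only [Set.piecewise_eq_of_mem _ _ _ hi] using .proj i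
  · simpa only [Set.piecewise_eq_of_notMem _ _ _ hi] using .const (c i)

variable {f : A.carrier → B.carrier}

theorem IsHom.exists_isPolynomial_codomain (hf : IsHom A B f)
    {p : (Fin n → A.carrier) → A.carrier} (hp : IsPolynomial A p) :
    ∃ q, IsPolynomial B q ∧ ∀ x, q (f ∘ x) = f (p x) := by
  induction hp with
  | proj i => exact ⟨_, .proj i, fun _ => rfl⟩
  | const a => exact ⟨_, .const (f a), fun _ => rfl⟩
  | app o g _ ih =>
    choose q hq hqg using ih
    exact ⟨_, .app o q hq, fun x => by simp only [hqg, hf o]⟩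

theorem IsHom.exists_isPolynomial_domain (hf : IsHom A B f) (hsurj : Function.Surjective f)
    {q : (Fin n → B.carrier) → B.carrier} (hq : IsPolynomial B q) :
    ∃ p, IsPolynomial A p ∧ ∀ x, q (f ∘ x) = f (p x) := by
  induction hq with
  | proj i => exact ⟨_, .proj i, fun _ => rfl⟩
  | const b =>
    obtain ⟨a, rfl⟩ := hsurj b
    exact ⟨_, .const a, fun _ => rfl⟩
  | app o g _ ih =>
    choose p hp hpg using ih
    exact ⟨_, .app o p hp, fun x => by simp only [hpg, hf o]⟩

end Polynomials

namespace Con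

variable {A B : Algebra σ}

/-- The preimage of a congruence under a homomorphism. -/
def comap (c : Con B) (f : A.carrier → B.carrier) (hf : IsHom A B f) : Con A where
  r a b := c.r (f a) (f b)
  refl _ := c.refl _
  symm h := c.symm h
  trans h h' := c.trans h h'
  compat o x y h := by simpa only [hf o] using c.compat o _ _ h

theorem isHom_quotMk (γ : Con A) : IsHom A (quotAlg A γ) (Quotient.mk γ.toSetoid) :=
  fun o _ => Quotient.sound (s := γ.toSetoid) <| γ.compat o _ _ fun _ =>
    γ.symm (Quotient.mk_out (s := γ.toSetoid) _)

theorem comap_quot {α γ : Con A} (h : γ ≤ α) :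
    (α.quot γ h).comap (Quotient.mk γ.toSetoid) γ.isHom_quotMk = α := rfl

theorem sup_le {c d e : Con A} (hc : c ≤ e) (hd : d ≤ e) : sup c d ≤ e :=
  fun _ _ h => h e fun _ => Or.rec (hc _ _) (hd _ _)

variable {I : Type} {f : I → Con A}

theorem le_iSup (i : I) : f i ≤ iSup f :=
  fun a b h _ hc => hc (a, b) ⟨i, h⟩

theorem iSup_le {c : Con A} (h : ∀ i, f i ≤ c) : iSup f ≤ c :=
  fun _ _ hab => hab c fun _ ⟨i, hi⟩ => h i _ _ hi

end Con

section Chains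

open Relation

theorem reflTransGen_pi {ι : Type*} [Finite ι] [DecidableEq ι] {X : ι → Type*}
    {R : ∀ i, X i → X i → Prop} {x y : ∀ i, X i} (h : ∀ i, ReflTransGen (R i) (x i) (y i)) :
    ReflTransGen (fun u v => ∃ i c, R i (u i) c ∧ v = Function.update u i c) x y := by
  have move_coord (u : ∀ i, X i) (i : ι) {c : X i} (hc : ReflTransGen (R i) (u i) c) :
      ReflTransGen (fun u v => ∃ i c, R i (u i) c ∧ v = Function.update u i c)
        u (Function.update u i c) := by
    induction hc with
    | refl => rw [Function.update_eq_self]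
    | @tail d c _ hdc ih => exact ih.tail ⟨i, c, by simpa using hdc, by simp⟩
  cases nonempty_fintype ι
  suffices ∀ s : Finset ι, ReflTransGen _ x (s.piecewise y x) by
    simpa using this Finset.univ
  intro s
  induction s using Finset.induction_on with
  | empty => rw [Finset.piecewise_empty]
  | insert i s hi ih =>
    rw [Finset.piecewise_insert]
    exact ih.trans (move_coord _ i (by simpa [hi] using h i))

namespace Con

variable {A : Algebra σ} {I : Type} {f : I → Con A}

theorem reflTransGen_tuple {n : ℕ} {x y : Fin n → A.carrier}
    (h : ∀ j, ReflTransGen (fun a b => ∃ i, (f i).r a b) (x j) (y j)) :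
    ReflTransGen (fun u v => ∃ i, ∀ j, (f i).r (u j) (v j)) x y := by
  refine ReflTransGen.mono ?_ _ _ (reflTransGen_pi h)
  rintro u _ ⟨j, c, ⟨i, hi⟩, rfl⟩
  refine ⟨i, fun k => ?_⟩
  obtain rfl | hkj := eq_or_ne k j
  · simpa using hi
  · simpa [hkj] using (f i).refl _

/-- The relation of being joined by a chain of steps in the congruences `f i`, as a congruence.
It is an explicit description of `iSup f`. -/
def chain (f : I → Con A) : Con A where
  r := ReflTransGen fun a b => ∃ i, (f i).r a b
  refl _ := .refl
  symm h := by
    rw [← reflTransGen_swap]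
    exact ReflTransGen.mono (fun _ _ ⟨i, hi⟩ => ⟨i, (f i).symm hi⟩) _ _ h
  trans := .trans
  compat o _ _ h :=
    ReflTransGen.lift (A.interp o) (fun _ _ ⟨i, hi⟩ => ⟨i, (f i).compat o _ _ hi⟩) _ _
      (reflTransGen_tuple h)

theorem iSup_le_chain : iSup f ≤ chain f :=
  iSup_le fun i _ _ h => .single ⟨i, h⟩

/-- The condition `θ ∧ (β ∘ (δ ∧ θ) ∘ β) ⊆ δ`: a pair of `δ ∧ θ` which is moved along `β` to
another pair of `θ` remains in `δ`. -/
def Transports (θ δ β : Con A) : Prop :=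
  ∀ a b, θ.r a b → (∃ x y, β.r a x ∧ (δ.r x y ∧ θ.r x y) ∧ β.r y b) → δ.r a b

theorem Transports.rel_of_iSup {θ δ : Con A} (hf : ∀ i, Transports θ δ (f i)) {n : ℕ}
    {P Q : (Fin n → A.carrier) → A.carrier} (hP : IsPolynomial A P) (hQ : IsPolynomial A Q)
    (hPQ : ∀ u, θ.r (P u) (Q u)) {x y : Fin n → A.carrier} (hxy : ∀ j, (iSup f).r (x j) (y j))
    (hx : δ.r (P x) (Q x)) : δ.r (P y) (Q y) := by
  have hchain := reflTransGen_tuple fun j => iSup_le_chain _ _ (hxy j)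
  clear hxy
  induction hchain with
  | refl => exact hx
  | @tail u v _ huv ih =>
    obtain ⟨i, hi⟩ := huv
    exact hf i _ _ (hPQ v) ⟨P u, Q u, (f i).symm (hP.rel (f i) hi), ⟨ih, hPQ u⟩, hQ.rel (f i) hi⟩

end Con

end Chains

section Cubes

variable {A B : Algebra σ} {N m n : ℕ}

/-- The vertex `(ε, t)` of the cube spanned by `a` and `b`: block `j` is taken from `b` if `ε j`,
and the last block is taken from `b` if `t`. -/
def cubeVertex {X : Type} (g : Fin N → Fin (n + 1)) (a b : Fin N → X) (ε : Fin n → Bool)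
    (t : Bool) : Fin N → X :=
  chooseVec g a b (Fin.lastCases (motive := fun _ => Bool) t ε)

/-- The tuples `a` and `b` are congruent modulo `α j` on block `j` and modulo `β` on the last
block. -/
structure BlockRel (α : Fin n → Con A) (β : Con A) (g : Fin N → Fin (n + 1))
    (a b : Fin N → A.carrier) : Prop where
  last : ∀ {i}, g i = Fin.last n → β.r (a i) (b i)
  castSucc : ∀ {i j}, g i = Fin.castSucc j → (α j).r (a i) (b i)

/-- The function `p` is constant modulo `δ` on the edge of the cube which leaves the vertex
`(ε, false)` in the direction of the last block. -/
def EdgeRel (δ : Con A) (p : (Fin N → A.carrier) → A.carrier) (g : Fin N → Fin (n + 1))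
    (a b : Fin N → A.carrier) (ε : Fin n → Bool) : Prop :=
  δ.r (p (cubeVertex g a b ε false)) (p (cubeVertex g a b ε true))

section Vertices

variable {X Y : Type} {g : Fin N → Fin (n + 1)} {a b : Fin N → X} {ε : Fin n → Bool} {t : Bool}
  {i : Fin N}

theorem cubeVertex_of_eq_last (hi : g i = Fin.last n) :
    cubeVertex g a b ε t i = if t then b i else a i := by
  simp [cubeVertex, chooseVec, hi]

theorem cubeVertex_of_eq_castSucc {j : Fin n} (hi : g i = Fin.castSucc j) :
    cubeVertex g a b ε t i = if ε j then b i else a i := by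
  simp [cubeVertex, chooseVec, hi]

theorem comp_cubeVertex (f : X → Y) :
    f ∘ cubeVertex g a b ε t = cubeVertex g (f ∘ a) (f ∘ b) ε t :=
  funext fun _ => apply_ite f _ _ _

open scoped Classical in
theorem cubeVertex_update {k : Fin n} {s : Bool} :
    cubeVertex g a b (Function.update ε k s) t =
      (g ⁻¹' {Fin.castSucc k}).piecewise (if s then b else a) (cubeVertex g a b ε t) := by
  funext i
  cases hi : g i using Fin.lastCases with
  | last => simp [Set.piecewise, hi, cubeVertex_of_eq_last, (Fin.castSucc_ne_last k).symm]
  | cast j =>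
    obtain rfl | hjk := eq_or_ne j k <;>
      simp [Set.piecewise, cubeVertex_of_eq_castSucc, ite_apply, *]

end Vertices

theorem centralizes_iff {α : Fin n → Con A} {β δ : Con A} :
    Centralizes α β δ ↔
      ∀ {N : ℕ} {p : (Fin N → A.carrier) → A.carrier}, IsPolynomial A p →
        ∀ {g : Fin N → Fin (n + 1)} {a b : Fin N → A.carrier}, BlockRel α β g a b →
          (∀ ε ≠ fun _ => true, EdgeRel δ p g a b ε) → EdgeRel δ p g a b fun _ => true := by
  have blockRel_iff {N : ℕ} {g : Fin N → Fin (n + 1)} {a b : Fin N → A.carrier} :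
      BlockRel α β g a b ↔
        ∀ i, (Fin.lastCases (motive := fun _ => Con A) β α (g i)).r (a i) (b i) := by
    refine ⟨fun h i => ?_, fun h => ⟨fun {i} hi => ?_, fun {i _} hi => ?_⟩⟩
    · cases hi : g i using Fin.lastCases with
      | last => simpa using h.last hi
      | cast j => simpa using h.castSucc hi
    · simpa [hi] using h i
    · simpa [hi] using h i
  simp only [blockRel_iff]
  exact Iff.rfl

theorem BlockRel.mono {α α' : Fin n → Con A} {β β' : Con A} {g : Fin N → Fin (n + 1)}
    {a b : Fin N → A.carrier} (hα : ∀ i, α i ≤ α' i) (hβ : β ≤ β') (h : BlockRel α β g a b) :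
    BlockRel α' β' g a b :=
  ⟨fun hi => hβ _ _ (h.last hi), fun hi => hα _ _ _ (h.castSucc hi)⟩

theorem BlockRel.rel_cubeVertex {α : Fin n → Con A} {β : Con A} {g : Fin N → Fin (n + 1)}
    {a b : Fin N → A.carrier} (h : BlockRel α β g a b) (ε : Fin n → Bool) (i : Fin N) :
    β.r (cubeVertex g a b ε false i) (cubeVertex g a b ε true i) := by
  cases hi : g i using Fin.lastCases with
  | last => simpa [cubeVertex_of_eq_last hi] using h.last hi
  | cast j => simpa [cubeVertex_of_eq_castSucc hi] using β.refl _

theorem centralizes_sInf {α : Fin n → Con A} {β : Con A} {S : Set (Con A)}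
    (h : ∀ δ ∈ S, Centralizes α β δ) : Centralizes α β (Con.sInf S) :=
  centralizes_iff.2 fun hp _ _ _ hab hε δ hδ =>
    centralizes_iff.1 (h δ hδ) hp hab fun ε hne => hε ε hne δ hδ

theorem Centralizes.mono {α α' : Fin n → Con A} {β β' δ : Con A} (hα : ∀ i, α i ≤ α' i)
    (hβ : β ≤ β') (h : Centralizes α' β' δ) : Centralizes α β δ :=
  centralizes_iff.2 fun hp _ _ _ hab => centralizes_iff.1 h hp (hab.mono hα hβ)

section Reindexing

open Function

/-- The map of blocks which renumbers block `e j` as `j` and merges every block outside the range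
of `e` into the last one. -/
noncomputable def pullBlock (e : Fin m → Fin n) : Fin (n + 1) → Fin (m + 1) :=
  Fin.lastCases (Fin.last m) (extend e Fin.castSucc fun _ => Fin.last m)

/-- The vertex at which the blocks outside the range of `e`, except for the last one, are switched
to `b`. It replaces `a` when these blocks are merged into the last one. -/
noncomputable def switchedVertex {X : Type} (e : Fin m → Fin n) (g : Fin N → Fin (n + 1))
    (a b : Fin N → X) : Fin N → X :=
  cubeVertex g a b (extend e (fun _ => false) fun _ => true) false

variable {e : Fin m → Fin n} {g : Fin N → Fin (n + 1)}

theorem pullBlock_eq_castSucc_iff (he : Injective e) {x : Fin (n + 1)} {l : Fin m} :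
    pullBlock e x = Fin.castSucc l ↔ x = Fin.castSucc (e l) := by
  cases x using Fin.lastCases with
  | last => simp [pullBlock, (Fin.castSucc_ne_last _).symm]
  | cast j =>
    by_cases hj : ∃ k, e k = j
    · obtain ⟨k, rfl⟩ := hj
      simp [pullBlock, he.extend_apply, he.eq_iff]
    · have hne : j ≠ e l := fun h => hj ⟨l, h.symm⟩
      simp [pullBlock, extend_apply' _ _ _ hj, hne, (Fin.castSucc_ne_last _).symm]

theorem cubeVertex_pullBlock (he : Injective e) {X : Type} {a b : Fin N → X} (ε : Fin m → Bool)
    (t : Bool) :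
    cubeVertex (pullBlock e ∘ g) (switchedVertex e g a b) b ε t =
      cubeVertex g a b (extend e ε fun _ => true) t := by
  funext i
  cases hi : g i using Fin.lastCases with
  | last => simp [switchedVertex, cubeVertex, chooseVec, pullBlock, hi]
  | cast j =>
    by_cases hj : ∃ k, e k = j
    · obtain ⟨k, rfl⟩ := hj
      simp [switchedVertex, cubeVertex, chooseVec, pullBlock, hi, he.extend_apply]
    · simp [switchedVertex, cubeVertex, chooseVec, pullBlock, hi, extend_apply' _ _ _ hj]

theorem BlockRel.comp_pullBlock (he : Injective e) {α : Fin n → Con A} {β : Con A}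
    {a b : Fin N → A.carrier} (h : BlockRel α β g a b) :
    BlockRel (α ∘ e) β (pullBlock e ∘ g) (switchedVertex e g a b) b := by
  refine ⟨fun {i} hlast => ?_, fun {i l} hl => ?_⟩
  · cases hi : g i using Fin.lastCases with
    | last => simpa [switchedVertex, cubeVertex_of_eq_last hi] using h.last hi
    | cast j =>
      have hj : ¬∃ l, e l = j := by
        rintro ⟨l, rfl⟩
        exact Fin.castSucc_ne_last l (((pullBlock_eq_castSucc_iff he).2 hi).symm.trans hlast)
      simpa [switchedVertex, cubeVertex_of_eq_castSucc hi, extend_apply' _ _ _ hj] using β.refl _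
  · have hi : g i = Fin.castSucc (e l) := (pullBlock_eq_castSucc_iff he).1 hl
    simpa [switchedVertex, cubeVertex_of_eq_castSucc hi, he.extend_apply] using h.castSucc hi

theorem Centralizes.of_comp_injective (he : Injective e) {α : Fin n → Con A} {β δ : Con A}
    (h : Centralizes (α ∘ e) β δ) : Centralizes α β δ := by
  refine centralizes_iff.2 fun {N p} hp {g a b} hab hε => ?_
  have edge_iff (ε : Fin m → Bool) :
      EdgeRel δ p (pullBlock e ∘ g) (switchedVertex e g a b) b ε ↔
        EdgeRel δ p g a b (extend e ε fun _ => true) := by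
    simp only [EdgeRel, cubeVertex_pullBlock he]
  have extend_ne {ε : Fin m → Bool} (hne : ε ≠ fun _ => true) :
      extend e ε (fun _ => true) ≠ fun _ => true :=
    fun h => hne (by rw [← extend_comp he ε fun _ => true, h]; rfl)
  simpa only [edge_iff, extend_const] using
    centralizes_iff.1 h hp (hab.comp_pullBlock he) fun ε hne =>
      (edge_iff ε).2 (hε _ (extend_ne hne))

theorem centralizes_comp_perm_iff {α : Fin n → Con A} {β δ : Con A} (e : Equiv.Perm (Fin n)) :
    Centralizes (α ∘ e) β δ ↔ Centralizes α β δ := by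
  refine ⟨.of_comp_injective e.injective, fun h => .of_comp_injective e.symm.injective ?_⟩
  rwa [comp_assoc, e.self_comp_symm, comp_id]

end Reindexing

section Homomorphisms

variable {f : A.carrier → B.carrier} {hf : IsHom A B f} {g : Fin N → Fin (n + 1)}
  {a b : Fin N → A.carrier}

theorem blockRel_comap_iff {α : Fin n → Con B} {β : Con B} :
    BlockRel (fun i => (α i).comap f hf) (β.comap f hf) g a b ↔
      BlockRel α β g (f ∘ a) (f ∘ b) :=
  ⟨fun h => ⟨h.last, h.castSucc⟩, fun h => ⟨h.last, h.castSucc⟩⟩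

theorem edgeRel_comap_iff {δ : Con B} {p : (Fin N → A.carrier) → A.carrier}
    {q : (Fin N → B.carrier) → B.carrier} (hpq : ∀ x, q (f ∘ x) = f (p x)) {ε : Fin n → Bool} :
    EdgeRel (δ.comap f hf) p g a b ε ↔ EdgeRel δ q g (f ∘ a) (f ∘ b) ε := by
  simp only [EdgeRel, ← comp_cubeVertex, hpq]
  exact Iff.rfl

theorem centralizes_comap_iff (hsurj : Function.Surjective f) {α : Fin n → Con B} {β δ : Con B} :
    Centralizes (fun i => (α i).comap f hf) (β.comap f hf) (δ.comap f hf) ↔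
      Centralizes α β δ := by
  simp only [centralizes_iff]
  constructor
  · intro h N q hq g a b hab hε
    obtain ⟨p, hp, hpq⟩ := hf.exists_isPolynomial_domain hsurj hq
    obtain ⟨a, rfl⟩ := hsurj.comp_left a
    obtain ⟨b, rfl⟩ := hsurj.comp_left b
    exact (edgeRel_comap_iff hpq).1 <|
      h hp (blockRel_comap_iff.2 hab) fun ε hne => (edgeRel_comap_iff hpq).2 (hε ε hne)
  · intro h N p hp g a b hab hε
    obtain ⟨q, hq, hpq⟩ := hf.exists_isPolynomial_codomain hp
    exact (edgeRel_comap_iff hpq).2 <|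
      h hq (blockRel_comap_iff.1 hab) fun ε hne => (edgeRel_comap_iff hpq).1 (hε ε hne)

end Homomorphisms

theorem centralizes_quot_iff {α : Fin n → Con A} {β δ γ : Con A} (hα : ∀ i, γ ≤ α i)
    (hβ : γ ≤ β) (hδ : γ ≤ δ) :
    Centralizes (fun i => (α i).quot γ (hα i)) (β.quot γ hβ) (δ.quot γ hδ) ↔
      Centralizes α β δ := by
  rw [← centralizes_comap_iff (hf := γ.isHom_quotMk) Quotient.mk_surjective]
  simp only [Con.comap_quot]

theorem centralizes_of_le_iSup {α : Fin n → Con A} {θ δ : Con A} {I : Type} {f : I → Con A}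
    (hf : ∀ i, Con.Transports θ δ (f i)) {k : Fin n} (hk : α k ≤ Con.iSup f) :
    Centralizes α θ δ := by
  classical
  refine centralizes_iff.2 fun {N p} hp {g a b} hab hε => ?_
  let s : Set (Fin N) := g ⁻¹' {Fin.castSucc k}
  let w : Bool → Fin N → A.carrier := cubeVertex g a b fun _ => true
  let P (t : Bool) (u : Fin N → A.carrier) : A.carrier := p (s.piecewise u (w t))
  have hP (t : Bool) : IsPolynomial A (P t) := hp.comp_piecewise s (w t)
  have hθ (u : Fin N → A.carrier) : θ.r (P false u) (P true u) := by
    refine hp.rel θ fun i => ?_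
    by_cases hi : i ∈ s
    · simpa [hi] using θ.refl _
    · simpa [hi] using hab.rel_cubeVertex _ i
  have hxy (i : Fin N) : (Con.iSup f).r (a i) (s.piecewise b a i) := by
    by_cases hi : i ∈ s
    · simpa [hi] using hk _ _ (hab.castSucc hi)
    · simpa [hi] using (Con.iSup f).refl _
  have h_start : δ.r (P false a) (P true a) := by
    have hne : Function.update (fun _ => true) k false ≠ fun _ => true :=
      fun h => by simpa using congrFun h k
    simpa [EdgeRel, cubeVertex_update] using hε _ hne
  have h_end (t : Bool) : P t (s.piecewise b a) = p (w t) := by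
    refine congrArg p (funext fun i => ?_)
    by_cases hi : i ∈ s
    · simp [hi, w, cubeVertex_of_eq_castSucc (show g i = Fin.castSucc k from hi)]
    · simp [hi]
  have := Con.Transports.rel_of_iSup hf (hP false) (hP true) hθ hxy h_start
  rwa [h_end, h_end] at this

end Cubes

/-- Basic properties of the higher centralizer relation
(Lemma 2.2 of "On Supernilpotent Algebras").  Here `C(α₁,…,αₙ,β;δ)` is written
`Centralizes α β δ` with `α : Fin n → Con A` the initial congruences and `β` the last one. -/
theorem centralizer_properties {σ : Signature} (A : Algebra σ) :
    -- (1) intersection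
    (∀ (n : ℕ) (α : Fin n → Con A) (β : Con A) (I : Type) (δt : I → Con A),
      (∀ t : I, Centralizes α β (δt t)) → Centralizes α β (Con.sInf (Set.range δt))) ∧
    -- (2) monotonicity
    (∀ (n : ℕ) (α α' : Fin n → Con A) (β β' δ : Con A),
      (∀ i, α i ≤ α' i) → β ≤ β' → Centralizes α' β' δ → Centralizes α β δ) ∧
    -- (3) permuting the initial congruences
    (∀ (n : ℕ) (α : Fin n → Con A) (β δ : Con A) (e : Equiv.Perm (Fin n)),
      Centralizes α β δ ↔ Centralizes (fun i => α (e i)) β δ) ∧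
    -- (4) quotients
    (∀ (n : ℕ) (α : Fin n → Con A) (β δ γ : Con A)
      (hα : ∀ i, γ ≤ α i) (hβ : γ ≤ β) (hδ : γ ≤ δ),
      Centralizes α β δ ↔
        Centralizes (fun i => (α i).quot γ (hα i)) (β.quot γ hβ) (δ.quot γ hδ)) ∧
    -- (5) deleting an initial congruence
    (∀ (n : ℕ) (α : Fin (n + 1) → Con A) (β δ : Con A) (i : Fin (n + 1)),
      Centralizes (fun j : Fin n => α (i.succAbove j)) β δ → Centralizes α β δ) ∧
    -- (6)
    (∀ (n : ℕ) (α : Fin n → Con A) (lastc δ β γ : Con A) (k : Fin n),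
      (∀ a b : A.carrier, lastc.r a b →
        (∃ x y, β.r a x ∧ (δ.r x y ∧ lastc.r x y) ∧ β.r y b) → δ.r a b) →
      (Centralizes (Function.update α k β) lastc δ ∧
        ((∀ a b : A.carrier, lastc.r a b →
            (∃ x y, γ.r a x ∧ (δ.r x y ∧ lastc.r x y) ∧ γ.r y b) → δ.r a b) →
          Centralizes (Function.update α k (Con.sup β γ)) lastc δ))) := by
  refine ⟨fun n α β I δt h => centralizes_sInf (Set.forall_mem_range.2 h),
    fun n α α' β β' δ hα hβ => Centralizes.mono hα hβ,
    fun n α β δ e => (centralizes_comp_perm_iff e).symm,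
    fun n α β δ γ hα hβ hδ => (centralizes_quot_iff hα hβ hδ).symm,
    fun n α β δ i => Centralizes.of_comp_injective i.succAbove_right_injective,
    fun n α θ δ β γ k hβ => ?_⟩
  let f : {c : Con A // Con.Transports θ δ c} → Con A := Subtype.val
  have centralizes_update {c : Con A} (hc : c ≤ Con.iSup f) :
      Centralizes (Function.update α k c) θ δ :=
    centralizes_of_le_iSup (k := k) Subtype.property (by rwa [Function.update_self])
  have hβf : β ≤ Con.iSup f := Con.le_iSup (f := f) ⟨β, hβ⟩
  exact ⟨centralizes_update hβf, fun hγ =>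
    centralizes_update (Con.sup_le hβf (Con.le_iSup (f := f) ⟨γ, hγ⟩))⟩

end UA
end

section
/- Let A be an algebra, let f be a k-ary polynomial of A, and suppose f absorbs (a₁,…,a_k) to a. Then for any partition n = n₁+⋯+n_k (each n_i ≥ 1) and any congruences α^i_j of A (i ∈ {1,…,k}, j ∈ {1,…,n_i}), f maps the product of classes a₁/[α¹₁,…,α¹_{n₁}] × ⋯ × a_k/[α^k₁,…,α^k_{n_k}] into the class a/[[α¹₁,…,α¹_{n₁}],…,[α^k₁,…,α^k_{n_k}]] (with the convention [α] = α for a single congruence). In particular, if A is n-supernilpotent, then for every m ≥ n the only m-ary a-absorbing polynomial of A is the constant map with value a. -/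
set_option autoImplicit false

namespace UA

variable {σ : Signature}

/-! Let `f` absorb `(a₁, …, a_k)` to `c`. On the cube `{a₁, b₁} × ⋯ × {a_k, b_k}`, `f` takes the
value `c` at every vertex except possibly `b`. The term condition defining `[γ₁, …, γ_k]` then
forces `f b` into the class of `c`, for arbitrary congruences `γᵢ` with `aᵢ ≡ bᵢ mod γᵢ`, and the
`γᵢ` may themselves be commutators. If `A` is `n`-supernilpotent and `f` has at least `n`
variables, merge them into exactly `n` blocks and take every `γᵢ` to be `1_A`. -/

section

variable {A : Algebra σ}

theorem IsPolynomial.map_rel {N : ℕ} {p : (Fin N → A.carrier) → A.carrier}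
    (hp : IsPolynomial A p) (θ : Con A) {x y : Fin N → A.carrier}
    (hxy : ∀ i, θ.r (x i) (y i)) : θ.r (p x) (p y) := by
  induction hp with
  | proj i => exact hxy i
  | const c => exact θ.refl c
  | app o _ _ ih => exact θ.compat o _ _ ih

theorem lastCases_last_castSucc {β : Sort*} {n : ℕ} (u : Fin (n + 1) → β) (j : Fin (n + 1)) :
    Fin.lastCases (motive := fun _ => β) (u (Fin.last n)) (fun i => u i.castSucc) j = u j := by
  induction j using Fin.lastCases with
  | last => exact Fin.lastCases_last
  | cast j => exact Fin.lastCases_castSucc j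

section Cube

variable {n N : ℕ} {γ : Fin (n + 1) → Con A} {p : (Fin N → A.carrier) → A.carrier}
  {g : Fin N → Fin (n + 1)} {a b : Fin N → A.carrier} {c : A.carrier}

theorem Centralizes.rel_of_cube {δ : Con A}
    (hδ : Centralizes (fun j : Fin n => γ j.castSucc) (γ (Fin.last n)) δ)
    (hp : IsPolynomial A p) (hab : ∀ i, (γ (g i)).r (a i) (b i))
    (hc : ∀ ε ≠ fun _ => true, δ.r c (p (chooseVec g a b ε))) : δ.r c (p b) := by
  have hlast (ε : Fin n → Bool) :
      δ.r c (p (chooseVec g a b (Fin.lastCases (motive := fun _ => Bool) false ε))) :=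
    hc _ fun h => by simpa using congrFun h (Fin.last n)
  have hcast (ε : Fin n → Bool) (hε : ε ≠ fun _ => true) :
      δ.r c (p (chooseVec g a b (Fin.lastCases (motive := fun _ => Bool) true ε))) :=
    hc _ fun h => hε (funext fun j => by simpa using congrFun h j.castSucc)
  have htop : (Fin.lastCases (motive := fun _ => Bool) true fun _ : Fin n => true) =
      fun _ => true :=
    funext (lastCases_last_castSucc fun _ => true)
  have hedge := hδ N p hp g a b (fun i => by rw [lastCases_last_castSucc γ]; exact hab i)
    fun ε hε => δ.trans (δ.symm (hlast ε)) (hcast ε hε)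
  rw [htop] at hedge
  exact δ.trans (hlast _) hedge

theorem commList_rel_of_cube (hp : IsPolynomial A p) (hab : ∀ i, (γ (g i)).r (a i) (b i))
    (hc : ∀ ε ≠ fun _ => true, (commList γ).r c (p (chooseVec g a b ε))) :
    (commList γ).r c (p b) := by
  cases n with
  | zero =>
    have hca : (γ 0).r c (p a) := hc (fun _ => false) fun h => by simpa using congrFun h 0
    have hab₀ (i : Fin N) : (γ 0).r (a i) (b i) := Fin.fin_one_eq_zero (g i) ▸ hab i
    exact (γ 0).trans hca (hp.map_rel (γ 0) hab₀)
  | succ n => exact fun δ hδ => Centralizes.rel_of_cube hδ hp hab fun ε hε => hc ε hε δ hδ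

end Cube

namespace Absorbs

variable {N : ℕ} {f : (Fin N → A.carrier) → A.carrier} {a : Fin N → A.carrier} {c : A.carrier}

theorem map_chooseVec {n : ℕ} (habs : Absorbs A f a c) {g : Fin N → Fin n}
    (hg : Function.Surjective g) (b : Fin N → A.carrier) {ε : Fin n → Bool}
    (hε : ε ≠ fun _ => true) : f (chooseVec g a b ε) = c := by
  obtain ⟨j, hj⟩ := Function.ne_iff.mp hε
  obtain ⟨i, rfl⟩ := hg j
  exact habs _ ⟨i, if_neg hj⟩

theorem commList_rel_apply {n : ℕ} (habs : Absorbs A f a c) (hf : IsPolynomial A f)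
    {g : Fin N → Fin (n + 1)} (hg : Function.Surjective g) {γ : Fin (n + 1) → Con A}
    {b : Fin N → A.carrier} (hab : ∀ i, (γ (g i)).r (a i) (b i)) : (commList γ).r c (f b) :=
  commList_rel_of_cube hf hab fun _ hε => by
    rw [habs.map_chooseVec hg b hε]
    exact (commList γ).refl c

theorem eq_const_of_supernilpotent {n : ℕ} (habs : Absorbs A f a c) (hf : IsPolynomial A f)
    (hA : Supernilpotent A n) (hN : N ≠ 0) (hn : n ≤ N) : f = fun _ => c := by
  have hle : n - 1 + 1 ≤ N := by omega
  have hblocks : Function.Surjective (Function.invFun (Fin.castLE hle)) :=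
    Function.invFun_surjective (Fin.castLE_injective hle)
  funext b
  have hrel : (nfold Con.top n).r c (f b) := habs.commList_rel_apply hf hblocks fun _ => trivial
  rw [Supernilpotent] at hA
  rw [hA] at hrel
  exact Eq.symm hrel

end Absorbs

end

/-- Lemma 3.2 of "On Supernilpotent Algebras": an absorbing polynomial maps products of
commutator classes into a class of the commutator of commutators; in particular, in an
`n`-supernilpotent algebra every `m`-ary (`m ≥ n`) `a`-absorbing polynomial is constant. -/
theorem absorbing_polynomial_commutator {σ : Signature} (A : Algebra σ) {k₀ : ℕ}
    (f : (Fin (k₀ + 1) → A.carrier) → A.carrier) (hf : IsPolynomial A f)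
    (av : Fin (k₀ + 1) → A.carrier) (a : A.carrier) (habs : Absorbs A f av a) :
    (∀ (n : ℕ) (nn : Fin (k₀ + 1) → ℕ), (∑ i, (nn i + 1)) = n →
      ∀ α : (i : Fin (k₀ + 1)) → Fin (nn i + 1) → Con A,
        ∀ b : Fin (k₀ + 1) → A.carrier,
          (∀ i, (commList (α i)).r (av i) (b i)) →
          (commList (fun i => commList (α i))).r a (f b)) ∧
    (∀ n : ℕ, 2 ≤ n → Supernilpotent A n →
      ∀ m : ℕ, n ≤ m → ∀ g : (Fin m → A.carrier) → A.carrier,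
        IsPolynomial A g → Absorbs A g (fun _ => a) a → g = fun _ => a) := by
  constructor
  · intro _ _ _ α b hb
    exact habs.commList_rel_apply hf (g := id) Function.surjective_id hb
  · intro n hn hA m hm g hg hga
    exact hga.eq_const_of_supernilpotent hg hA (by omega) hm

end UA
end

section
/- Let L = ⟨A,·,\,/,0,F⟩ be an n-type expanded loop. If f ∈ Ab^k₀ L with 1 ≤ k ≤ n−1, then for any left-associated product ∏_{j=1}^m y_j and any coordinate i, the polynomial f(x₁,…,x_{i−1},∏_{j=1}^m y_j,x_{i+1},…,x_k) can be written as a product of 0-absorbing polynomials in the variables x₁,…,x_k,y₁,…,y_m whose arities p all satisfy k ≤ p ≤ n−1. -/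
set_option autoImplicit false

namespace UA

variable {σ : Signature}

/-!
For a `k`-ary `0`-absorbing polynomial `f` and a coordinate `i`, the failure of `f` to distribute
over `·` in coordinate `i` is measured by the quotient `(f(…,u,…) · f(…,w,…)) \ f(…,u·w,…)`. It
is again a `0`-absorbing polynomial, in the `k + 1` variables obtained by adding `w`. Hence
`f(…,u·w,…)` is the product of `f(…,u,…)`, `f(…,w,…)` and a `0`-absorbing polynomial of arity
`k + 1` in which `u` occupies a single coordinate. Taking for `u` the product of all but the last
`y` and for `w` the last `y`, induction on the number of factors, for all `f` of all arities at
once, expands both occurrences of `u`. The arity stops growing at `n - 1`, where `0`-absorbing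
polynomials distribute.
-/

section

open Function (update)

namespace IsPolynomial

section Algebra

variable {A : Algebra σ} {k N : ℕ} {f : (Fin k → A.carrier) → A.carrier}

theorem comp_s3 (hf : IsPolynomial A f) {g : Fin k → (Fin N → A.carrier) → A.carrier}
    (hg : ∀ j, IsPolynomial A (g j)) : IsPolynomial A (fun x => f (fun j => g j x)) := by
  induction hf with
  | proj i => exact hg i
  | const a => exact const a
  | app o h _ ih => exact app o (fun j x => h j (fun i => g i x)) ih

theorem comp_update (hf : IsPolynomial A f) {g : Fin k → (Fin N → A.carrier) → A.carrier}
    (hg : ∀ j, IsPolynomial A (g j)) (i : Fin k) {h : (Fin N → A.carrier) → A.carrier}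
    (hh : IsPolynomial A h) :
    IsPolynomial A (fun x => f (update (fun j => g j x) i (h x))) := by
  have hupdate : ∀ j, IsPolynomial A (update g i h j) :=
    (Function.forall_update_iff g fun _ => IsPolynomial A).2 ⟨hh, fun j _ => hg j⟩
  have heval (x : Fin N → A.carrier) :
      update (fun j => g j x) i (h x) = fun j => update g i h j x :=
    funext fun j => (Function.apply_update (fun _ p => p x) g i h j).symm
  simpa only [heval] using hf.comp_s3 hupdate

end Algebra

section ExpLoop

variable {ι : Type} {ar : ι → ℕ} {α : Type} {L : ExpLoop ι ar α} {N : ℕ} {f g : (Fin N → α) → α}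

theorem mul (hf : IsPolynomial L.toAlgebra f) (hg : IsPolynomial L.toAlgebra g) :
    IsPolynomial L.toAlgebra (fun x : Fin N → α => L.mul (f x) (g x)) :=
  app (A := L.toAlgebra) LoopOp.mul ![f, g] (Fin.forall_fin_two.2 ⟨hf, hg⟩)

theorem ldiv (hf : IsPolynomial L.toAlgebra f) (hg : IsPolynomial L.toAlgebra g) :
    IsPolynomial L.toAlgebra (fun x : Fin N → α => L.ldiv (f x) (g x)) :=
  app (A := L.toAlgebra) LoopOp.ldiv ![f, g] (Fin.forall_fin_two.2 ⟨hf, hg⟩)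

end ExpLoop

end IsPolynomial

variable {ι : Type} {ar : ι → ℕ} {α : Type} {L : ExpLoop ι ar α} {k : ℕ} {f : (Fin k → α) → α}

namespace ExpLoop

/-- The set `Ab₀ᵏ L` of `k`-ary `0`-absorbing polynomials of an expanded loop. -/
def absorbingPolynomials (L : ExpLoop ι ar α) (k : ℕ) : Set ((Fin k → α) → α) :=
  {f | IsPolynomial L.toAlgebra f ∧ Absorbs L.toAlgebra f (fun _ => L.zero) L.zero}

/-- The operation `f` distributes over the loop multiplication in each coordinate. -/
def Distributes (L : ExpLoop ι ar α) (f : (Fin k → α) → α) : Prop :=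
  ∀ (i : Fin k) (x : Fin k → α) (u w : α),
    f (update x i (L.mul u w)) = L.mul (f (update x i u)) (f (update x i w))

/-- The defect of distributivity of `f` in coordinate `i`. The two factors are the `i`-th and the
last variable of the defect; the other variables are those of `f`. -/
def distribDefect (L : ExpLoop ι ar α) (f : (Fin k → α) → α) (i : Fin k) :
    (Fin (k + 1) → α) → α :=
  fun v => L.ldiv
    (L.mul (f (Fin.init v)) (f (update (Fin.init v) i (v (Fin.last k)))))
    (f (update (Fin.init v) i (L.mul (v i.castSucc) (v (Fin.last k)))))

theorem ldiv_self (L : ExpLoop ι ar α) (a : α) : L.ldiv a a = L.zero := by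
  simpa only [L.mul_zero] using L.ldiv_mul a L.zero

theorem update_mul_eq (L : ExpLoop ι ar α) (f : (Fin k → α) → α) (i : Fin k) (x : Fin k → α)
    (u w : α) :
    f (update x i (L.mul u w)) =
      L.mul (L.mul (f (update x i u)) (f (update x i w)))
        (L.distribDefect f i (update (Fin.snoc x w : Fin (k + 1) → α) i.castSucc u)) := by
  rw [← Fin.snoc_update]
  simp only [distribDefect, Fin.init_snoc, Fin.snoc_last, Fin.snoc_castSucc,
    Function.update_self, Function.update_idem, L.mul_ldiv]

theorem isPolynomial_distribDefect (hf : IsPolynomial L.toAlgebra f) (i : Fin k) :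
    IsPolynomial L.toAlgebra (L.distribDefect f i) :=
  have hproj (j : Fin (k + 1)) : IsPolynomial L.toAlgebra (fun v : Fin (k + 1) → α => v j) :=
    .proj (A := L.toAlgebra) j
  have hinit (j : Fin k) := hproj j.castSucc
  ((hf.comp_s3 hinit).mul (hf.comp_update hinit i (hproj _))).ldiv
    (hf.comp_update hinit i ((hproj _).mul (hproj _)))

theorem distribDefect_eq_zero (hf : f ∈ L.absorbingPolynomials k) (i : Fin k)
    {v : Fin (k + 1) → α} {j : Fin (k + 1)} (hj : v j = L.zero) :
    L.distribDefect f i v = L.zero := by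
  have hzero {x : Fin k → α} {l : Fin k} (hl : x l = L.zero) : f x = L.zero :=
    hf.2 x ⟨l, hl⟩
  unfold distribDefect
  induction j using Fin.lastCases with
  | last =>
    have hv : update (Fin.init v) i (v i.castSucc) = Fin.init v := Function.update_eq_self i _
    have hupdate : f (update (Fin.init v) i L.zero) = L.zero :=
      hzero (Function.update_self i L.zero (Fin.init v))
    rw [hj, hupdate, L.mul_zero, L.mul_zero, hv, L.ldiv_self]
  | cast j =>
    have hinit : (Fin.init v : Fin k → α) j = L.zero := hj
    rw [hzero hinit, L.zero_mul]
    obtain rfl | hji := eq_or_ne j i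
    · rw [hj, L.zero_mul, L.ldiv_self]
    · have hupdate (u : α) : f (update (Fin.init v) i u) = L.zero :=
        hzero ((Function.update_of_ne hji u _).trans hinit)
      rw [hupdate, hupdate, L.ldiv_self]

theorem distribDefect_mem_absorbingPolynomials (hf : f ∈ L.absorbingPolynomials k) (i : Fin k) :
    L.distribDefect f i ∈ L.absorbingPolynomials (k + 1) :=
  ⟨isPolynomial_distribDefect hf.1 i, fun _ ⟨_, hj⟩ => distribDefect_eq_zero hf i hj⟩

end ExpLoop

namespace ProdOfAbs

variable {I : Type} {hi : ℕ}

theorem of_lo_le {lo lo' : ℕ} {F : (I → α) → α} (hF : ProdOfAbs L lo hi F) (hlo : lo' ≤ lo) :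
    ProdOfAbs L lo' hi F := by
  induction hF with
  | base h sel hp hp' hpoly habs => exact base h sel (hlo.trans hp) hp' hpoly habs
  | mul _ _ ihF ihG => exact mul ihF ihG

theorem update_var (hf : f ∈ L.absorbingPolynomials k) (hk : k ≤ hi) (i : Fin k) (s : Fin k → I)
    (t : I) : ProdOfAbs L k hi (fun v => f (update (v ∘ s) i (v t))) := by
  simp only [← Function.comp_update]
  exact base f (update s i t) le_rfl hk hf.1 hf.2

end ProdOfAbs

theorem ntype_absorbing_product_expansion_general {N : ℕ}
    (hdist : ∀ f ∈ L.absorbingPolynomials N, L.Distributes f) (hkN : k ≤ N)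
    (hf : f ∈ L.absorbingPolynomials k) (i : Fin k) {I : Type} (s : Fin k → I) {m : ℕ}
    (t : Fin (m + 1) → I) :
    ProdOfAbs L k N (fun v => f (update (v ∘ s) i (lassoc L.mul (v ∘ t)))) := by
  induction m generalizing k f with
  | zero => exact .update_var hf hkN i s (t 0)
  | succ m ih =>
    let u (v : I → α) : α := lassoc L.mul (v ∘ Fin.init t)
    let w (v : I → α) : α := v (t (Fin.last (m + 1)))
    change ProdOfAbs L k N (fun v => f (update (v ∘ s) i (L.mul (u v) (w v))))
    have hfactors : ProdOfAbs L k N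
        (fun v => L.mul (f (update (v ∘ s) i (u v))) (f (update (v ∘ s) i (w v)))) :=
      (ih hkN hf i s (Fin.init t)).mul (.update_var hf hkN i s _)
    obtain rfl | hlt := hkN.eq_or_lt
    · simpa only [hdist f hf i] using hfactors
    · have hdefect : ProdOfAbs L (k + 1) N (fun v => L.distribDefect f i
          (update (Fin.snoc (v ∘ s) (w v) : Fin (k + 1) → α) i.castSucc (u v))) := by
        simpa only [Fin.comp_snoc] using ih hlt
          (ExpLoop.distribDefect_mem_absorbingPolynomials hf i) i.castSucc
          (Fin.snoc s (t (Fin.last (m + 1)))) (Fin.init t)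
      simpa only [L.update_mul_eq f i] using hfactors.mul (hdefect.of_lo_le k.le_succ)

end

/-- Lemma 3.5 of "On Supernilpotent Algebras": in an `n`-type expanded loop,
substituting a left-associated product into one coordinate of a `k`-ary
`0`-absorbing polynomial yields a product of `0`-absorbing polynomials in the
`x`'s and `y`'s of arities `p` with `k ≤ p ≤ n - 1`. -/
theorem ntype_absorbing_product_expansion {ι : Type} {ar : ι → ℕ} {α : Type}
    (L : ExpLoop ι ar α) (n : ℕ) (hL : L.IsNType n)
    (k : ℕ) (hk1 : 1 ≤ k) (hkn : k ≤ n - 1)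
    (f : (Fin k → α) → α) (hfp : IsPolynomial L.toAlgebra f)
    (hfa : Absorbs L.toAlgebra f (fun _ => L.zero) L.zero)
    (i : Fin k) (m : ℕ) :
    ∃ F : ((Fin k ⊕ Fin (m + 1)) → α) → α,
      ProdOfAbs L k (n - 1) F ∧
      ∀ (x : Fin k → α) (y : Fin (m + 1) → α),
        f (Function.update x i (lassoc L.mul y)) = F (Sum.elim x y) := by
  exact ⟨_, ntype_absorbing_product_expansion_general (fun g hg => hL.2.1 g hg.1 hg.2) hkn
    ⟨hfp, hfa⟩ i Sum.inl Sum.inr, fun _ _ => rfl⟩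

end UA
end
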